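/- arXiv:2509.20733 — 2 statements merged into one kernel-verified Lean document; each statement's English description precedes it below -/
import Mathlib

section
/- Let n, m be natural numbers, a ≥ 0, let A : EuclideanSpace ℝ (Fin n) →L[ℝ] EuclideanSpace ℝ (Fin m) be a continuous linear map with operator norm ‖A‖ ≤ a, and let b ∈ EuclideanSpace ℝ (Fin m). Define the single tanh layer g : EuclideanSpace ℝ (Fin n) → EuclideanSpace ℝ (Fin m) by g(x) = (i ↦ Real.tanh ((A x + b) i)). Then the second derivative of g is uniformly bounded: ‖iteratedFDeriv ℝ 2 g x‖ ≤ 2·a² for every x. -/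
/-!
Coordinatewise, `g x i = tanh ((A x + b) i)`, so the chain rule gives
`D²g(x)(u, v) i = tanh''((A x + b) i) * (A u) i * (A v) i`. Since `tanh'' = -2 tanh (1 - tanh²)` is
bounded by `2` in absolute value, and the entrywise product of two vectors satisfies
`∑ i, (p i * q i)² ≤ ‖p‖² * ‖q‖²` in the Euclidean norm, one gets
`‖D²g(x)(u, v)‖ ≤ 2 * ‖A u‖ * ‖A v‖ ≤ 2 * a² * ‖u‖ * ‖v‖`.
-/

lemma hasDerivAt_tanh_aux (s : ℝ) : HasDerivAt Real.tanh (1 - Real.tanh s ^ 2) s := by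
  have hc : Real.cosh s ≠ 0 := (Real.cosh_pos s).ne'
  have h := (Real.hasDerivAt_sinh s).div (Real.hasDerivAt_cosh s) hc
  have e : Real.sinh / Real.cosh = Real.tanh := by
    funext t
    simp [Real.tanh_eq_sinh_div_cosh]
  rw [e] at h
  have e' : 1 - Real.tanh s ^ 2 =
      (Real.cosh s * Real.cosh s - Real.sinh s * Real.sinh s) / Real.cosh s ^ 2 := by
    rw [Real.tanh_eq_sinh_div_cosh]
    field_simp
  rw [e']
  exact h

lemma contDiff_tanh_aux : ContDiff ℝ 2 Real.tanh := by
  have e : Real.tanh = fun t => Real.sinh t / Real.cosh t := by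
    funext t
    exact Real.tanh_eq_sinh_div_cosh t
  rw [e]
  exact Real.contDiff_sinh.div Real.contDiff_cosh fun t => (Real.cosh_pos t).ne'

lemma sq_tanh_second_deriv_le (s : ℝ) :
    (-2 * Real.tanh s * (1 - Real.tanh s ^ 2)) ^ 2 ≤ 4 := by
  have h1 : Real.tanh s ^ 2 ≤ 1 := by
    nlinarith [Real.tanh_lt_one s, Real.neg_one_lt_tanh s]
  have h0 := sq_nonneg (Real.tanh s)
  have h2 : (1 - Real.tanh s ^ 2) ^ 2 ≤ 1 := by nlinarith
  have h3 := mul_le_mul h1 h2 (sq_nonneg _) zero_le_one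
  nlinarith

/-- Second derivative of the ridge function `y ↦ tanh (L y + c)`, for a linear form `L`. -/
lemma iteratedFDeriv_two_tanh_comp {E : Type*} [NormedAddCommGroup E] [NormedSpace ℝ E]
    (L : E →L[ℝ] ℝ) (c : ℝ) (x : E) (v : Fin 2 → E) :
    iteratedFDeriv ℝ 2 (fun y => Real.tanh (L y + c)) x v =
      -2 * Real.tanh (L x + c) * (1 - Real.tanh (L x + c) ^ 2) * (L (v 0) * L (v 1)) := by
  have h1 (y : E) : HasFDerivAt (fun y => Real.tanh (L y + c))
      ((1 - Real.tanh (L y + c) ^ 2) • L) y :=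
    (hasDerivAt_tanh_aux _).comp_hasFDerivAt y (L.hasFDerivAt.add_const c)
  have e : fderiv ℝ (fun y => Real.tanh (L y + c)) =
      fun y => (1 - Real.tanh (L y + c) ^ 2) • L := funext fun y => (h1 y).fderiv
  have h2 := ((((h1 x).pow 2).const_sub 1).smul_const L).fderiv
  rw [iteratedFDeriv_two_apply, e, h2]
  simp
  ring

/-- The entrywise product of two vectors is bounded by the product of their Euclidean norms. -/
lemma sum_sq_mul_sq_le {m : ℕ} (p q : EuclideanSpace ℝ (Fin m)) :
    ∑ i, p i ^ 2 * q i ^ 2 ≤ ‖p‖ ^ 2 * ‖q‖ ^ 2 := by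
  rw [EuclideanSpace.real_norm_sq_eq, EuclideanSpace.real_norm_sq_eq, Finset.sum_mul]
  refine Finset.sum_le_sum fun i _ => mul_le_mul_of_nonneg_left ?_ (sq_nonneg _)
  exact Finset.single_le_sum (f := fun j => q j ^ 2) (fun j _ => sq_nonneg _) (Finset.mem_univ i)

/-- The second derivative of a single tanh layer `x ↦ tanh(A x + b)` (entrywise tanh after an
affine map with `‖A‖ ≤ a`) is uniformly bounded by `2·a²`. -/
theorem tanh_layer_hessian_bound (n m : ℕ) (a : ℝ) (ha : 0 ≤ a)
    (A : EuclideanSpace ℝ (Fin n) →L[ℝ] EuclideanSpace ℝ (Fin m)) (hA : ‖A‖ ≤ a)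
    (b : EuclideanSpace ℝ (Fin m))
    (g : EuclideanSpace ℝ (Fin n) → EuclideanSpace ℝ (Fin m))
    (hg : ∀ x i, g x i = Real.tanh ((A x + b) i)) :
    ∀ x, ‖iteratedFDeriv ℝ 2 g x‖ ≤ 2 * a ^ 2 := by
  intro x
  have hsm : ContDiff ℝ 2 g := by
    rw [contDiff_euclidean]
    intro i
    simp only [hg]
    refine contDiff_tanh_aux.comp ?_
    exact contDiff_euclidean.1 (A.contDiff.add contDiff_const) i
  refine ContinuousMultilinearMap.opNorm_le_bound (by positivity) fun v => ?_
  have key (i : Fin m) : (iteratedFDeriv ℝ 2 g x v) i =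
      -2 * Real.tanh (A x i + b i) * (1 - Real.tanh (A x i + b i) ^ 2) *
        (A (v 0) i * A (v 1) i) := by
    -- Evaluation at `i` is continuous linear, hence commutes with the second derivative.
    have h := (EuclideanSpace.proj (𝕜 := ℝ) (ι := Fin m) i).iteratedFDeriv_comp_left
      (x := x) (i := 2) hsm.contDiffAt le_rfl
    have e : (EuclideanSpace.proj (𝕜 := ℝ) (ι := Fin m) i) ∘ g =
        fun y => Real.tanh (((EuclideanSpace.proj i).comp A) y + b i) := by
      funext y
      simp [hg]
    have h' := congrArg (fun T => T v) h
    rw [e] at h'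
    simp only [iteratedFDeriv_two_tanh_comp] at h'
    simpa using h'.symm
  have hv (j : Fin 2) : ‖A (v j)‖ ≤ a * ‖v j‖ := A.le_of_opNorm_le hA _
  have hsq : ‖iteratedFDeriv ℝ 2 g x v‖ ^ 2 ≤ (2 * (‖A (v 0)‖ * ‖A (v 1)‖)) ^ 2 := by
    calc ‖iteratedFDeriv ℝ 2 g x v‖ ^ 2
        = ∑ i, (iteratedFDeriv ℝ 2 g x v) i ^ 2 := EuclideanSpace.real_norm_sq_eq _
      _ ≤ ∑ i, 4 * (A (v 0) i ^ 2 * A (v 1) i ^ 2) := by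
          refine Finset.sum_le_sum fun i _ => ?_
          rw [key, mul_pow, mul_pow (A (v 0) i)]
          exact mul_le_mul_of_nonneg_right (sq_tanh_second_deriv_le _) (by positivity)
      _ ≤ 4 * (‖A (v 0)‖ ^ 2 * ‖A (v 1)‖ ^ 2) := by
          rw [← Finset.mul_sum]
          exact mul_le_mul_of_nonneg_left (sum_sq_mul_sq_le _ _) (by norm_num)
      _ = (2 * (‖A (v 0)‖ * ‖A (v 1)‖)) ^ 2 := by ring
  calc ‖iteratedFDeriv ℝ 2 g x v‖ ≤ 2 * (‖A (v 0)‖ * ‖A (v 1)‖) :=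
        le_of_sq_le_sq hsq (by positivity)
    _ ≤ 2 * ((a * ‖v 0‖) * (a * ‖v 1‖)) := by
        have := mul_le_mul (hv 0) (hv 1) (norm_nonneg _) (by positivity)
        linarith
    _ = 2 * a ^ 2 * ∏ j, ‖v j‖ := by
        rw [Fin.prod_univ_two]
        ring
end

section
/- Let E, F, G be real normed vector spaces, and let h : E → F and g : F → G be twice continuously differentiable (ContDiff ℝ 2) maps satisfying the uniform bounds ‖fderiv ℝ g y‖ ≤ α and ‖iteratedFDeriv ℝ 2 g y‖ ≤ β for all y ∈ F, and ‖fderiv ℝ h x‖ ≤ γ and ‖iteratedFDeriv ℝ 2 h x‖ ≤ δ for all x ∈ E. Then the composition satisfies the second-derivative bound ‖iteratedFDeriv ℝ 2 (g ∘ h) x‖ ≤ β·γ² + α·δ for every x ∈ E. -/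
/-! Differentiating `D(g ∘ h)(x) = Dg(h x) ∘ Dh(x)` once more, by the product rule for composition
of linear maps (`HasFDerivAt.clm_comp`), gives
`D²(g ∘ h)(x) v = Dg(h x) ∘ (D²h(x) v) + (D²g(h x) (Dh(x) v)) ∘ Dh(x)`.
The operator norm is submultiplicative, so the two terms are at most `α δ ‖v‖` and `β γ² ‖v‖`. -/

/-- The second derivative, as a multilinear map, has the same norm as the derivative of the
derivative, as an iterated linear map. -/
lemma norm_iteratedFDeriv_two_eq {E F : Type*}
    [NormedAddCommGroup E] [NormedSpace ℝ E] [NormedAddCommGroup F] [NormedSpace ℝ F]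
    (f : E → F) (x : E) :
    ‖iteratedFDeriv ℝ 2 f x‖ = ‖fderiv ℝ (fderiv ℝ f) x‖ := by
  rw [← norm_iteratedFDeriv_one, norm_iteratedFDeriv_fderiv]

/-- Chain-rule bound for Hessians of compositions:
`‖D²(g ∘ h)‖ ≤ ‖D²g‖·‖Dh‖² + ‖Dg‖·‖D²h‖` under uniform derivative bounds. -/
theorem hessian_comp_bound {E F G : Type*}
    [NormedAddCommGroup E] [NormedSpace ℝ E]
    [NormedAddCommGroup F] [NormedSpace ℝ F]
    [NormedAddCommGroup G] [NormedSpace ℝ G]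
    (h : E → F) (g : F → G) (α β γ δ : ℝ)
    (hh : ContDiff ℝ 2 h) (hg : ContDiff ℝ 2 g)
    (hgd : ∀ y, ‖fderiv ℝ g y‖ ≤ α) (hgd2 : ∀ y, ‖iteratedFDeriv ℝ 2 g y‖ ≤ β)
    (hhd : ∀ x, ‖fderiv ℝ h x‖ ≤ γ) (hhd2 : ∀ x, ‖iteratedFDeriv ℝ 2 h x‖ ≤ δ) :
    ∀ x, ‖iteratedFDeriv ℝ 2 (g ∘ h) x‖ ≤ β * γ ^ 2 + α * δ := by
  intro x
  simp only [norm_iteratedFDeriv_two_eq] at hgd2 hhd2 ⊢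
  have hh1 : Differentiable ℝ h := hh.differentiable (by norm_num)
  have hg1 : Differentiable ℝ g := hg.differentiable (by norm_num)
  have hh2 : Differentiable ℝ (fderiv ℝ h) :=
    (hh.fderiv_right (m := 1) (by norm_num)).differentiable (by norm_num)
  have hg2 : Differentiable ℝ (fderiv ℝ g) :=
    (hg.fderiv_right (m := 1) (by norm_num)).differentiable (by norm_num)
  have hα : 0 ≤ α := (norm_nonneg _).trans (hgd (h x))
  have hβ : 0 ≤ β := (norm_nonneg (fderiv ℝ (fderiv ℝ g) (h x))).trans (hgd2 (h x))
  have hγ : 0 ≤ γ := (norm_nonneg _).trans (hhd x)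
  have hδ : 0 ≤ δ := (norm_nonneg (fderiv ℝ (fderiv ℝ h) x)).trans (hhd2 x)
  have hD : fderiv ℝ (g ∘ h) = fun y => (fderiv ℝ g (h y)).comp (fderiv ℝ h y) :=
    funext fun y => fderiv_comp y (hg1 _) (hh1 y)
  have hc : HasFDerivAt (fun y => fderiv ℝ g (h y))
      ((fderiv ℝ (fderiv ℝ g) (h x)).comp (fderiv ℝ h x)) x :=
    (hg2 (h x)).hasFDerivAt.comp x (hh1 x).hasFDerivAt
  rw [hD, (hc.clm_comp (hh2 x).hasFDerivAt).fderiv]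
  refine ContinuousLinearMap.opNorm_le_bound _ (by positivity) fun v => ?_
  calc ‖(fderiv ℝ g (h x)).comp (fderiv ℝ (fderiv ℝ h) x v)
        + (fderiv ℝ (fderiv ℝ g) (h x) (fderiv ℝ h x v)).comp (fderiv ℝ h x)‖
      ≤ ‖fderiv ℝ g (h x)‖ * ‖fderiv ℝ (fderiv ℝ h) x v‖
        + ‖fderiv ℝ (fderiv ℝ g) (h x) (fderiv ℝ h x v)‖ * ‖fderiv ℝ h x‖ :=
        norm_add_le_of_le (ContinuousLinearMap.opNorm_comp_le _ _)
          (ContinuousLinearMap.opNorm_comp_le _ _)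
    _ ≤ α * (δ * ‖v‖) + (β * (γ * ‖v‖)) * γ := by
        gcongr
        · exact hgd _
        · exact ContinuousLinearMap.le_of_opNorm_le _ (hhd2 x) v
        · exact ContinuousLinearMap.le_of_opNorm_le_of_le _ (hgd2 _)
            (ContinuousLinearMap.le_of_opNorm_le _ (hhd x) v)
        · exact hhd x
    _ = (β * γ ^ 2 + α * δ) * ‖v‖ := by ring
end
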